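/- Fix an integer r ≥ 1 and let n_2 = 3r − 1 (which equals R_2(rK_2)). Then R̃_2(rK_2; n_2) = 3r − 2 = n_2 − 1. Equivalently: (1) Builder has a strategy that, playing on K_{3r−1} with 2 colors, guarantees within 3r − 2 moves that some color class contains r pairwise disjoint edges, against every Painter strategy; and (2) Painter has a strategy such that for every way Builder adaptively selects 3r − 3 distinct edges of K_{3r−1}, after these moves neither color class contains r pairwise disjoint edges. -/

import Mathlib

open Finset

/-- Two edges of a complete graph (elements of `Sym2 (Fin n)`) are disjoint if they
share no vertex. -/
def EdgeDisjoint {n : ℕ} (e f : Sym2 (Fin n)) : Prop := ∀ v, v ∈ e → v ∉ f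

/-- A finite set of elements of `Sym2 (Fin n)` is a matching if each element is a genuine
(non-loop) edge and the edges are pairwise disjoint. -/
def IsMatchingIn {n : ℕ} (M : Finset (Sym2 (Fin n))) : Prop :=
  (∀ e ∈ M, ¬ e.IsDiag) ∧ (M : Set (Sym2 (Fin n))).Pairwise EdgeDisjoint

/-- A history of the online Ramsey game on `K_n` with `t` colours: the list of
edges played so far, each together with the colour Painter gave it. -/
abbrev GameHistory (n t : ℕ) := List (Sym2 (Fin n) × Fin t)

/-- A Builder strategy: given the history so far, select the next edge. -/
abbrev BuilderStrategy (n t : ℕ) := GameHistory n t → Sym2 (Fin n)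

/-- A Painter strategy: given the history so far and the newly selected edge,
choose a colour for it. -/
abbrev PainterStrategy (n t : ℕ) := GameHistory n t → Sym2 (Fin n) → Fin t

/-- The history after `k` moves when Builder plays strategy `B` against Painter
strategy `P`. -/
def gamePlay {n t : ℕ} (B : BuilderStrategy n t) (P : PainterStrategy n t) :
    ℕ → GameHistory n t
  | 0 => []
  | k + 1 =>
      let h := gamePlay B P k
      h ++ [(B h, P h (B h))]

/-- Builder plays legally for the first `k` moves against `P`: every selected edge
is a genuine (non-loop) edge not selected before. -/
def BuilderValid {n t : ℕ} (B : BuilderStrategy n t) (P : PainterStrategy n t)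
    (k : ℕ) : Prop :=
  ∀ j < k, ¬ (B (gamePlay B P j)).IsDiag ∧
    B (gamePlay B P j) ∉ (gamePlay B P j).map Prod.fst

/-- The history `h` contains, for some colour `i`, a matching of `r i` edges all
coloured `i`. -/
def HistoryHasMatching (n t : ℕ) (r : Fin t → ℕ) (h : GameHistory n t) : Prop :=
  ∃ i : Fin t, ∃ M : Finset (Sym2 (Fin n)),
    M.card = r i ∧ IsMatchingIn M ∧ ∀ e ∈ M, (e, i) ∈ h

/-- Builder can force, within `k` legal moves on `K_n` with `t` colours, some colour
`i` to contain a matching of `r i` edges, against every Painter strategy. -/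
def BuilderWinsIn (n t : ℕ) (r : Fin t → ℕ) (k : ℕ) : Prop :=
  ∃ B : BuilderStrategy n t, (∀ P : PainterStrategy n t, BuilderValid B P k) ∧
    ∀ P : PainterStrategy n t, HistoryHasMatching n t r (gamePlay B P k)

/-- The restricted online Ramsey number `R̃(r₁K₂,…,r_tK₂; n)`: the least `k` such
that Builder can force a win within `k` moves. -/
noncomputable def restrictedOnlineRamsey (n t : ℕ) (r : Fin t → ℕ) : ℕ :=
  sInf {k | BuilderWinsIn n t r k}

/-- A colouring `c` of (the edges of) `K_N` with `t` colours contains, for some colour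
`i`, a matching of `r i` edges all coloured `i`. -/
def ColoringHasMatching (N t : ℕ) (r : Fin t → ℕ) (c : Sym2 (Fin N) → Fin t) : Prop :=
  ∃ i : Fin t, ∃ M : Finset (Sym2 (Fin N)),
    M.card = r i ∧ IsMatchingIn M ∧ ∀ e ∈ M, c e = i

/-- The classical Ramsey number `R(r₁K₂,…,r_tK₂)`: the least `N` such that every
`t`-colouring of the edges of `K_N` contains, for some `i`, a matching of `r i`
edges in colour `i`. -/
noncomputable def matchingRamsey (t : ℕ) (r : Fin t → ℕ) : ℕ :=
  sInf {N | ∀ c : Sym2 (Fin N) → Fin t, ColoringHasMatching N t r c}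

/-!
Builder always joins a fresh vertex to the end of a monochromatic path. A reply in the colour of
the path extends it; any other reply splits off the last path edge and the new edge as a cherry with
one edge of each colour. Once the path is used up, the fresh vertex is joined to any touched vertex
and starts a new path, at the cost of an edge but of no vertex. Three cherry vertices thus pay for
one matching edge in *both* colours and two path vertices for one in the path colour. Each move
touches one new vertex, and once `3r - 1` vertices are touched this gives `r` disjoint edges of one
colour.

Painter covers the edges of each colour by at most `r - 1` *blocks*, a block being a vertex or a
pair of vertices and covering the edges that contain it, so that a matching has at most one edge
per block. An edge meeting a block takes the colour of the block, which shrinks to a common vertex;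
an edge meeting no block becomes a block itself. In the second case two vertices outside all blocks
are available, and counting vertices and moves shows that some colour has room for the new block.
-/

section Strategies

variable {n t k : ℕ} {r : Fin t → ℕ} {I : GameHistory n t → Prop}

lemma length_gamePlay (B : BuilderStrategy n t) (P : PainterStrategy n t) (k : ℕ) :
    (gamePlay B P k).length = k := by
  induction k with
  | zero => rfl
  | succ k ih => simp [gamePlay, ih]

lemma builderWinsIn_of_invariant (hn : 0 < n) (nil : I [])
    (step : ∀ h, I h → h.length < k →
      ∃ e : Sym2 (Fin n), ¬ e.IsDiag ∧ e ∉ h.map Prod.fst ∧ ∀ c, I (h ++ [(e, c)]))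
    (win : ∀ h, I h → h.length = k → HistoryHasMatching n t r h) :
    BuilderWinsIn n t r k := by
  have : Nonempty (Sym2 (Fin n)) := ⟨s(⟨0, hn⟩, ⟨0, hn⟩)⟩
  choose! B not_isDiag not_mem preserves using step
  have invariant (P : PainterStrategy n t) : ∀ j ≤ k, I (gamePlay B P j) := by
    intro j hj
    induction j with
    | zero => exact nil
    | succ j ih => exact preserves _ (ih (by omega)) (by rw [length_gamePlay]; omega) _
  refine ⟨B, fun P j hj => ?_, fun P => win _ (invariant P k le_rfl) (length_gamePlay B P k)⟩
  have hlt : (gamePlay B P j).length < k := by rwa [length_gamePlay]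
  exact ⟨not_isDiag _ (invariant P j hj.le) hlt, not_mem _ (invariant P j hj.le) hlt⟩

lemma not_builderWinsIn_of_invariant [NeZero t] (nil : I [])
    (step : ∀ h (e : Sym2 (Fin n)), I h → h.length < k → ¬ e.IsDiag → ∃ c, I (h ++ [(e, c)]))
    (safe : ∀ h, I h → ¬ HistoryHasMatching n t r h) :
    ¬ BuilderWinsIn n t r k := by
  rintro ⟨B, valid, win⟩
  choose! P preserves using step
  have invariant : ∀ j ≤ k, I (gamePlay B P j) := by
    intro j hj
    induction j with
    | zero => exact nil
    | succ j ih =>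
      exact preserves _ _ (ih (by omega)) (by rw [length_gamePlay]; omega) (valid P j hj).1
  exact safe _ (invariant k le_rfl) (win P)

end Strategies

section Matchings

variable {n t k : ℕ} {h h' : GameHistory n t} {i : Fin t} {S S' : Finset (Fin n)} {a b : Fin n}

lemma EdgeDisjoint.symm {e f : Sym2 (Fin n)} (hef : EdgeDisjoint e f) : EdgeDisjoint f e :=
  fun v hf he => hef v he hf

lemma IsMatchingIn.insert {M : Finset (Sym2 (Fin n))} {e : Sym2 (Fin n)} (hM : IsMatchingIn M)
    (he : ¬ e.IsDiag) (hdisj : ∀ f ∈ M, EdgeDisjoint e f) : IsMatchingIn (insert e M) := by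
  refine ⟨Finset.forall_mem_insert _ _ _ |>.2 ⟨he, hM.1⟩, ?_⟩
  rw [coe_insert]
  exact hM.2.insert fun f hf _ => ⟨hdisj f hf, (hdisj f hf).symm⟩

lemma IsMatchingIn.subset {M N : Finset (Sym2 (Fin n))} (hM : IsMatchingIn M) (hN : N ⊆ M) :
    IsMatchingIn N :=
  ⟨fun e he => hM.1 e (hN he), hM.2.mono (coe_subset.2 hN)⟩

/-- The edges of colour `i` in the history `h` contain a matching of `k` edges all of whose
endpoints lie in `S`. -/
def HasMatchingOn (h : GameHistory n t) (i : Fin t) (S : Finset (Fin n)) (k : ℕ) : Prop :=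
  ∃ M : Finset (Sym2 (Fin n)), #M = k ∧ IsMatchingIn M ∧ ∀ e ∈ M, (e, i) ∈ h ∧ ∀ v ∈ e, v ∈ S

namespace HasMatchingOn

lemma zero (h : GameHistory n t) (i : Fin t) (S : Finset (Fin n)) : HasMatchingOn h i S 0 :=
  ⟨∅, by simp [IsMatchingIn]⟩

lemma mono (hM : HasMatchingOn h i S k) (hh : h ⊆ h') (hS : S ⊆ S') : HasMatchingOn h' i S' k := by
  obtain ⟨M, hcard, hM, hMS⟩ := hM
  exact ⟨M, hcard, hM, fun e he => ⟨hh (hMS e he).1, fun v hv => hS ((hMS e he).2 v hv)⟩⟩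

lemma insert_edge (hM : HasMatchingOn h i S k) (hab : a ≠ b) (ha : a ∉ S) (hb : b ∉ S)
    (hedge : (s(a, b), i) ∈ h) : HasMatchingOn h i (insert a (insert b S)) (k + 1) := by
  obtain ⟨M, hcard, hM, hMS⟩ := hM
  have hdisj : ∀ f ∈ M, EdgeDisjoint s(a, b) f := by
    intro f hf v hv hvf
    rcases Sym2.mem_iff.1 hv with rfl | rfl
    exacts [ha ((hMS f hf).2 _ hvf), hb ((hMS f hf).2 _ hvf)]
  have hnew : s(a, b) ∉ M := fun hmem => ha ((hMS _ hmem).2 a (Sym2.mem_mk_left a b))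
  refine ⟨insert s(a, b) M, by rw [card_insert_of_notMem hnew, hcard],
    hM.insert (by simpa using hab) hdisj, Finset.forall_mem_insert _ _ _ |>.2 ⟨⟨hedge, ?_⟩, ?_⟩⟩
  · simp
  · exact fun e he => ⟨(hMS e he).1, fun v hv => by simp [(hMS e he).2 v hv]⟩

lemma append_path {l : List (Fin n)} (hM : HasMatchingOn h i S k) (hl : l.Nodup)
    (hlS : ∀ v ∈ l, v ∉ S) (hchain : l.IsChain fun a b => (s(a, b), i) ∈ h) :
    HasMatchingOn h i (S ∪ l.toFinset) (k + l.length / 2) := by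
  induction l using List.twoStepInduction with
  | nil => simpa using hM
  | singleton a => simpa using hM.mono (List.Subset.refl h) (subset_insert a S)
  | cons_cons a b l ih _ =>
    rw [List.forall_mem_cons, List.forall_mem_cons] at hlS
    simp only [List.nodup_cons, List.mem_cons, not_or, List.isChain_cons_cons] at hl hchain
    obtain ⟨⟨hab, hal⟩, hbl, hl⟩ := hl
    obtain ⟨haS, hbS, hlS⟩ := hlS
    have hrest := ih hl hlS hchain.2.tail
    have hnext := hrest.insert_edge hab (by simp [haS, hal]) (by simp [hbS, hbl]) hchain.1
    have hlen : k + (a :: b :: l).length / 2 = k + l.length / 2 + 1 := by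
      simp only [List.length_cons]; omega
    rw [hlen]
    simpa using hnext

lemma historyHasMatching {r : Fin t → ℕ} (hM : HasMatchingOn h i S k) (hk : r i ≤ k) :
    HistoryHasMatching n t r h := by
  obtain ⟨M, hcard, hM, hMS⟩ := hM
  obtain ⟨N, hNM, hN⟩ := exists_subset_card_eq (hcard ▸ hk)
  exact ⟨i, N, hN, hM.subset hNM, fun e he => (hMS e (hNM he)).1⟩

end HasMatchingOn

end Matchings

section Builder

variable {n m k : ℕ} {h : GameHistory n 2} {S : Finset (Fin n)} {l : List (Fin n)}
  {a b w : Fin n} {c c' : Fin 2}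

/-- Builder's invariant: the touched vertices are the vertices `S` of `m` disjoint cherries, each
with one edge of either colour, and the vertices of a path `l` of colour `c`. The cherries are
recorded only through the two matchings they provide, and `l` starts at the end where Builder
continues. -/
structure CherriesAndPath (h : GameHistory n 2) (S : Finset (Fin n)) (m : ℕ) (l : List (Fin n))
    (c : Fin 2) : Prop where
  card_eq : #S = 3 * m
  matching : ∀ i, HasMatchingOn h i S m
  nodup : l.Nodup
  disjoint : ∀ v ∈ l, v ∉ S
  chain : l.IsChain fun a b => (s(a, b), c) ∈ h
  touched : ∀ p ∈ h, ∀ v ∈ p.1, v ∈ S ∪ l.toFinset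
  length_eq : h.length + 1 = 3 * m + l.length

namespace CherriesAndPath

lemma singleton (a : Fin n) (c : Fin 2) : CherriesAndPath [] ∅ 0 [a] c where
  card_eq := rfl
  matching i := .zero _ i _
  nodup := List.nodup_singleton a
  disjoint := by simp
  chain := .singleton a
  touched := by simp
  length_eq := rfl

lemma exists_fresh (hI : CherriesAndPath h S m l c) (hn : h.length + 1 < n) :
    ∃ w, w ∉ S ∪ l.toFinset := by
  by_contra! hall
  have hcard : n ≤ #S + l.length := calc
    n = #(S ∪ l.toFinset) := by rw [eq_univ_of_forall hall, card_univ, Fintype.card_fin]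
    _ ≤ #S + #l.toFinset := card_union_le _ _
    _ ≤ #S + l.length := by gcongr; exact l.toFinset_card_le
  have := hI.card_eq
  have := hI.length_eq
  omega

lemma notMem_history (hI : CherriesAndPath h S m l c) (hw : w ∉ S ∪ l.toFinset) :
    s(a, w) ∉ h.map Prod.fst := by
  intro hmem
  obtain ⟨p, hp, hpe⟩ := List.mem_map.1 hmem
  exact hw (hI.touched p hp w (hpe ▸ Sym2.mem_mk_right a w))

lemma touched_append {V : Finset (Fin n)} (hI : CherriesAndPath h S m l c)
    (hV : S ∪ l.toFinset ⊆ V) (ha : a ∈ V) (hw : w ∈ V) :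
    ∀ p ∈ h ++ [(s(a, w), c')], ∀ v ∈ p.1, v ∈ V := by
  intro p hp v hv
  rcases List.mem_append.1 hp with hp | hp
  · exact hV (hI.touched p hp v hv)
  · obtain rfl := List.mem_singleton.1 hp
    rcases Sym2.mem_iff.1 hv with rfl | rfl <;> assumption

lemma cons (hI : CherriesAndPath h S m l c) (hw : w ∉ S ∪ l.toFinset) (ha : a ∈ S ∪ l.toFinset)
    (hchain : (w :: l).IsChain fun x y => (s(x, y), c') ∈ h ++ [(s(a, w), c')]) :
    CherriesAndPath (h ++ [(s(a, w), c')]) S m (w :: l) c' where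
  card_eq := hI.card_eq
  matching i := (hI.matching i).mono (List.subset_append_left _ _) Subset.rfl
  nodup := List.nodup_cons.2 ⟨by simp_all, hI.nodup⟩
  disjoint := List.forall_mem_cons.2 ⟨by simp_all, hI.disjoint⟩
  chain := hchain
  touched :=
    hI.touched_append (by grind [List.mem_toFinset]) (by grind [List.mem_toFinset]) (by simp)
  length_eq := by
    have := hI.length_eq
    simp only [List.length_append, List.length_cons, List.length_nil]
    omega

lemma split_cherry (hI : CherriesAndPath h S m (a :: b :: l) c)
    (hw : w ∉ S ∪ (a :: b :: l).toFinset) (hc : c' ≠ c) :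
    CherriesAndPath (h ++ [(s(a, w), c')]) (insert w (insert a (insert b S))) (m + 1) l c := by
  have hnodup := hI.nodup
  have hdisjoint := hI.disjoint
  have hchain := List.isChain_cons_cons.1 hI.chain
  simp only [List.nodup_cons, List.mem_cons, not_or] at hnodup
  rw [List.forall_mem_cons, List.forall_mem_cons] at hdisjoint
  simp only [mem_union, List.mem_toFinset, List.mem_cons, not_or] at hw
  obtain ⟨⟨hab, hal⟩, hbl, hl⟩ := hnodup
  obtain ⟨haS, hbS, hlS⟩ := hdisjoint
  obtain ⟨hwS, hwa, hwb, hwl⟩ := hw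
  have hsub : h ⊆ h ++ [(s(a, w), c')] := List.subset_append_left _ _
  exact {
    card_eq := by
      rw [card_insert_of_notMem (by simp [*]), card_insert_of_notMem (by simp [*]),
        card_insert_of_notMem hbS, hI.card_eq]
      ring
    matching := fun i => by
      by_cases hi : i = c
      · subst hi
        exact ((hI.matching i).insert_edge hab haS hbS hchain.1).mono hsub (subset_insert _ _)
      · obtain rfl : i = c' := by omega
        exact ((hI.matching i).mono hsub Subset.rfl).insert_edge (Ne.symm hwa) haS hwS (by simp)
          |>.mono (List.Subset.refl _) (by grind [List.mem_toFinset])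
    nodup := hl
    disjoint := by grind
    chain := hchain.2.tail.imp fun _ _ hxy => hsub hxy
    touched := hI.touched_append (by grind [List.mem_toFinset]) (by simp) (by simp)
    length_eq := by
      have := hI.length_eq
      simp only [List.length_append, List.length_cons, List.length_nil] at this ⊢
      omega }

lemma exists_endpoint (hI : CherriesAndPath h S m l c) (hw : w ∉ S ∪ l.toFinset) :
    ∃ a ∈ S ∪ l.toFinset, ∀ c', ∃ S' m' l' d,
      CherriesAndPath (h ++ [(s(a, w), c')]) S' m' l' d := by
  match l with
  | [] =>
    obtain ⟨a, ha⟩ : S.Nonempty := by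
      have := hI.length_eq
      rw [← card_pos, hI.card_eq]
      exact Nat.pos_of_ne_zero fun h0 => by simp [h0] at this
    have ha' := mem_union_left (List.toFinset []) ha
    exact ⟨a, ha', fun c' => ⟨S, m, [w], c', hI.cons hw ha' (.singleton w)⟩⟩
  | [a] =>
    have ha : a ∈ S ∪ [a].toFinset := by simp
    exact ⟨a, ha, fun c' => ⟨S, m, [w, a], c', hI.cons hw ha (by simp [Sym2.eq_swap])⟩⟩
  | a :: b :: l =>
    have ha : a ∈ S ∪ (a :: b :: l).toFinset := by simp
    refine ⟨a, ha, fun c' => ?_⟩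
    by_cases hc : c' = c
    · subst hc
      have hchain := hI.chain.imp fun _ _ hxy => List.mem_append_left [(s(a, w), c')] hxy
      exact ⟨S, m, w :: a :: b :: l, c', hI.cons hw ha (hchain.cons_cons (by simp [Sym2.eq_swap]))⟩
    · exact ⟨_, m + 1, l, c, hI.split_cherry hw hc⟩

lemma exists_move (hI : CherriesAndPath h S m l c) (hn : h.length + 1 < n) :
    ∃ e : Sym2 (Fin n), ¬ e.IsDiag ∧ e ∉ h.map Prod.fst ∧
      ∀ c', ∃ S' m' l' d, CherriesAndPath (h ++ [(e, c')]) S' m' l' d := by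
  obtain ⟨w, hw⟩ := hI.exists_fresh hn
  obtain ⟨a, ha, hnext⟩ := hI.exists_endpoint hw
  refine ⟨s(a, w), ?_, hI.notMem_history hw, hnext⟩
  rw [Sym2.mk_isDiag_iff]
  exact fun haw => hw (haw ▸ ha)

lemma historyHasMatching {r : Fin 2 → ℕ} (hI : CherriesAndPath h S m l c)
    (hr : ∀ i, r 0 + r 1 + r i ≤ h.length + 2) : HistoryHasMatching n 2 r h := by
  by_cases hm : ∃ i, r i ≤ m
  · obtain ⟨i, hi⟩ := hm
    exact (hI.matching i).historyHasMatching hi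
  · push Not at hm
    have hpath := (hI.matching c).append_path hI.nodup hI.disjoint hI.chain
    refine hpath.historyHasMatching ?_
    have := hI.length_eq
    have h0 := hm 0
    have h1 := hm 1
    have := hr c
    match c with
    | 0 | 1 => omega

end CherriesAndPath

theorem builderWinsIn_two_colours {r : Fin 2 → ℕ} (hn : k < n)
    (hr : ∀ i, r 0 + r 1 + r i ≤ k + 2) : BuilderWinsIn n 2 r k := by
  have hn0 : 0 < n := by omega
  refine builderWinsIn_of_invariant (I := fun h => ∃ S m l c, CherriesAndPath h S m l c) hn0
    ⟨_, _, _, _, .singleton ⟨0, hn0⟩ 0⟩ ?_ ?_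
  · rintro h ⟨S, m, l, c, hI⟩ hlen
    exact hI.exists_move (by omega)
  · rintro h ⟨S, m, l, c, hI⟩ rfl
    exact hI.historyHasMatching hr

end Builder

section Painter

variable {n t k : ℕ} {h : GameHistory n t} {T : Finset (Sym2 (Fin n) × Fin t)} {r s : Fin t → ℕ}
  {e : Sym2 (Fin n)} {p q : Sym2 (Fin n) × Fin t} {i : Fin t} {x : Fin n}

lemma card_le_card_of_forall_block_subset {ι : Type*} {M : Finset (Sym2 (Fin n))} {T : Finset ι}
    {block : ι → Sym2 (Fin n)} (hM : (M : Set (Sym2 (Fin n))).Pairwise EdgeDisjoint)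
    (hT : ∀ e ∈ M, ∃ q ∈ T, ∀ v ∈ block q, v ∈ e) : #M ≤ #T := by
  refine card_le_card_of_forall_subsingleton (fun e q => ∀ v ∈ block q, v ∈ e) hT ?_
  rintro q - e ⟨he, hqe⟩ f ⟨hf, hqf⟩
  have hv := (block q).out_fst_mem
  by_contra hef
  exact hM he hf hef _ (hqe _ hv) (hqf _ hv)

/-- The vertices lying in some block of the set `T` of coloured blocks. -/
def occupied (T : Finset (Sym2 (Fin n) × Fin t)) : Finset (Fin n) :=
  T.biUnion fun q => q.1.toFinset

lemma mem_occupied : x ∈ occupied T ↔ ∃ q ∈ T, x ∈ q.1 := by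
  simp only [occupied, mem_biUnion, Sym2.mem_toFinset]

/-- The map replacing the coloured block `q` by the one-vertex block `x` of the same colour and
fixing all other coloured blocks. A one-vertex block `x` is encoded as the loop `s(x, x)`. -/
def shrink (q : Sym2 (Fin n) × Fin t) (x : Fin n) : Sym2 (Fin n) × Fin t → Sym2 (Fin n) × Fin t :=
  Function.update id q (s(x, x), q.2)

lemma shrink_self (q : Sym2 (Fin n) × Fin t) (x : Fin n) : shrink q x q = (s(x, x), q.2) :=
  Function.update_self ..

lemma shrink_of_ne (hp : p ≠ q) (x : Fin n) : shrink q x p = p :=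
  Function.update_of_ne hp ..

lemma shrink_snd (q : Sym2 (Fin n) × Fin t) (x : Fin n) (p : Sym2 (Fin n) × Fin t) :
    (shrink q x p).2 = p.2 := by
  by_cases hp : p = q
  · rw [hp, shrink_self]
  · rw [shrink_of_ne hp]

lemma mem_of_mem_shrink {v : Fin n} (hx : x ∈ q.1) (hv : v ∈ (shrink q x p).1) : v ∈ p.1 := by
  by_cases hp : p = q
  · subst hp
    obtain rfl : v = x := by simpa [shrink_self] using hv
    exact hx
  · rwa [shrink_of_ne hp] at hv

lemma exists_occupied_subset_insert_shrink (T : Finset (Sym2 (Fin n) × Fin t)) (hx : x ∈ q.1) :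
    ∃ y, occupied T ⊆ insert y (occupied (T.image (shrink q x))) := by
  obtain ⟨y, hy⟩ := Sym2.mem_iff_exists.1 hx
  refine ⟨y, fun v hv => ?_⟩
  obtain ⟨p, hpT, hvp⟩ := mem_occupied.1 hv
  have hmem := mem_image_of_mem (shrink q x) hpT
  by_cases hp : p = q
  · rw [hp, hy, Sym2.mem_iff] at hvp
    rw [hp, shrink_self] at hmem
    rcases hvp with rfl | rfl
    · exact mem_insert_of_mem (mem_occupied.2 ⟨_, hmem, Sym2.mem_mk_left _ _⟩)
    · exact mem_insert_self _ _
  · exact mem_insert_of_mem (mem_occupied.2 ⟨_, hmem, by rwa [shrink_of_ne hp]⟩)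

/-- Painter's invariant: every played edge contains a block of its colour in `T`, and `T` has at
most `s i` blocks of colour `i`. The last field bounds the total number of blocks: a new block
occupies two further vertices, and a move releases at most one. -/
structure CoveredByBlocks (s : Fin t → ℕ) (h : GameHistory n t)
    (T : Finset (Sym2 (Fin n) × Fin t)) : Prop where
  covers : ∀ p ∈ h, ∃ q ∈ T, q.2 = p.2 ∧ ∀ v ∈ q.1, v ∈ p.1
  card_le : ∀ i, #{q ∈ T | q.2 = i} ≤ s i
  three_mul_card_le : 3 * #T ≤ #(occupied T) + h.length

namespace CoveredByBlocks

lemma empty (s : Fin t → ℕ) : CoveredByBlocks (n := n) s [] ∅ where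
  covers := by simp
  card_le := by simp
  three_mul_card_le := by simp

lemma card_le_of_isMatchingIn {M : Finset (Sym2 (Fin n))} (hI : CoveredByBlocks s h T)
    (hM : IsMatchingIn M) (hMh : ∀ e ∈ M, (e, i) ∈ h) : #M ≤ s i := by
  refine (card_le_card_of_forall_block_subset (block := Prod.fst) hM.2 fun e he => ?_).trans
    (hI.card_le i)
  obtain ⟨q, hq, hqi, hqe⟩ := hI.covers _ (hMh e he)
  exact ⟨q, mem_filter.2 ⟨hq, hqi⟩, hqe⟩

lemma exists_shrink (hI : CoveredByBlocks s h T) (hq : q ∈ T) (hxq : x ∈ q.1) (hxe : x ∈ e) :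
    ∃ T', CoveredByBlocks s (h ++ [(e, q.2)]) T' := by
  obtain ⟨y, hoccupied⟩ := exists_occupied_subset_insert_shrink T hxq
  refine ⟨T.image (shrink q x), fun p hp => ?_, fun i => ?_, ?_⟩
  · rcases List.mem_append.1 hp with hp | hp
    · obtain ⟨q', hq', hcolour, hsub⟩ := hI.covers p hp
      exact ⟨shrink q x q', mem_image_of_mem _ hq', (shrink_snd q x q').trans hcolour,
        fun v hv => hsub v (mem_of_mem_shrink hxq hv)⟩
    · obtain rfl := List.mem_singleton.1 hp
      exact ⟨shrink q x q, mem_image_of_mem _ hq, shrink_snd q x q,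
        by simpa [shrink_self] using hxe⟩
  · rw [filter_image]
    simp only [shrink_snd]
    exact le_trans card_image_le (hI.card_le i)
  · calc 3 * #(T.image (shrink q x)) ≤ 3 * #T := Nat.mul_le_mul_left 3 card_image_le
      _ ≤ #(occupied T) + h.length := hI.three_mul_card_le
      _ ≤ #(occupied (T.image (shrink q x))) + 1 + h.length := by
        gcongr; exact (card_le_card hoccupied).trans (card_insert_le _ _)
      _ = #(occupied (T.image (shrink q x))) + (h ++ [(e, q.2)]).length := by
        rw [List.length_append, List.length_singleton]; ring

lemma insert_block (hI : CoveredByBlocks s h T) (he : ¬ e.IsDiag)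
    (hfree : Disjoint e.toFinset (occupied T)) (hi : #{q ∈ T | q.2 = i} < s i) :
    CoveredByBlocks s (h ++ [(e, i)]) (insert (e, i) T) where
  covers := by
    simp only [List.forall_mem_append, List.forall_mem_singleton]
    refine ⟨fun p hp => ?_, (e, i), mem_insert_self _ _, rfl, fun _ hv => hv⟩
    obtain ⟨q, hq, hqp⟩ := hI.covers p hp
    exact ⟨q, mem_insert_of_mem hq, hqp⟩
  card_le j := by
    rw [filter_insert]
    split_ifs with hj
    · subst hj
      exact (card_insert_le _ _).trans hi
    · exact hI.card_le j
  three_mul_card_le := by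
    have hT : #(insert (e, i) T) ≤ #T + 1 := card_insert_le _ _
    have hocc : #(occupied (insert (e, i) T)) = 2 + #(occupied T) := by
      have hunion : occupied (insert (e, i) T) = e.toFinset ∪ occupied T := biUnion_insert
      rw [hunion, card_union_of_disjoint hfree, Sym2.card_toFinset_of_not_isDiag e he]
    have := hI.three_mul_card_le
    rw [List.length_append, List.length_singleton]
    omega

lemma exists_card_lt (hI : CoveredByBlocks s h T)
    (hlen : #(occupied T) + h.length < 3 * ∑ i, s i) : ∃ i, #{q ∈ T | q.2 = i} < s i := by
  by_contra! hfull
  have hsum : ∑ i, s i ≤ #T := calc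
    ∑ i, s i ≤ ∑ i, #{q ∈ T | q.2 = i} := sum_le_sum fun i _ => hfull i
    _ = #T := (card_eq_sum_card_fiberwise fun q _ => mem_coe.2 (mem_univ q.2)).symm
  have := hI.three_mul_card_le
  omega

lemma exists_colour (hI : CoveredByBlocks s h T) (he : ¬ e.IsDiag)
    (hlen : n + h.length < 3 * ∑ i, s i + 2) : ∃ i T', CoveredByBlocks s (h ++ [(e, i)]) T' := by
  by_cases hfree : Disjoint e.toFinset (occupied T)
  · have hcard : 2 + #(occupied T) ≤ n := by
      rw [← Sym2.card_toFinset_of_not_isDiag e he, ← card_union_of_disjoint hfree]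
      simpa using card_le_univ (e.toFinset ∪ occupied T)
    obtain ⟨i, hi⟩ := hI.exists_card_lt (by omega)
    exact ⟨i, _, hI.insert_block he hfree hi⟩
  · obtain ⟨x, hxe, hxT⟩ := not_disjoint_iff.1 hfree
    obtain ⟨q, hq, hxq⟩ := mem_occupied.1 hxT
    exact ⟨q.2, hI.exists_shrink hq hxq (Sym2.mem_toFinset.1 hxe)⟩

end CoveredByBlocks

theorem not_builderWinsIn [NeZero t] (hs : ∀ i, s i < r i) (hk : n + k ≤ 3 * ∑ i, s i + 2) :
    ¬ BuilderWinsIn n t r k := by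
  refine not_builderWinsIn_of_invariant (I := fun h => ∃ T, CoveredByBlocks s h T)
    ⟨∅, .empty s⟩ ?_ ?_
  · rintro h e ⟨T, hI⟩ hlen he
    exact hI.exists_colour he (by omega)
  · rintro h ⟨T, hI⟩ ⟨i, M, hcard, hM, hMh⟩
    exact (hs i).not_ge (hcard ▸ hI.card_le_of_isMatchingIn hM hMh)

end Painter

/-- For `r ≥ 1` and `n₂ = 3r − 1 = R₂(rK₂)`, we have `R̃₂(rK₂; n₂) = 3r − 2 = n₂ − 1`. -/
theorem restrictedOnlineRamsey_two_colours (r : ℕ) (hr : 1 ≤ r) :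
    restrictedOnlineRamsey (3 * r - 1) 2 (fun _ => r) = 3 * r - 2 := by
  have hwin : BuilderWinsIn (3 * r - 1) 2 (fun _ => r) (3 * r - 2) :=
    builderWinsIn_two_colours (by omega) fun _ => by omega
  refine le_antisymm (Nat.sInf_le hwin) (le_csInf ⟨_, hwin⟩ fun k hk => ?_)
  by_contra! hlt
  exact not_builderWinsIn (s := fun _ => r - 1) (fun _ => by omega)
    (by rw [Fin.sum_univ_two]; omega) hk
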